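/- The optimal rubbling numbers of the n-prisms are: for every k ≥ 2, ρ_opt(C_{3k−1}□P_2) = 2k and ρ_opt(C_{3k}□P_2) = 2k; for every k ≥ 1, ρ_opt(C_{3k+1}□P_2) = 2k + 1; and in the exceptional smallest case ρ_opt(C_3□P_2) = 3. -/

import Mathlib

open SimpleGraph

/-- A single rubbling move on `G`: either a pebbling move (remove two pebbles at `v`,
add one at an adjacent vertex `u`) or a strict rubbling move (remove one pebble each at
distinct `v` and `w`, both adjacent to `u`, and add one pebble at `u`). -/
def RubblingStep {V : Type*} [DecidableEq V] (G : SimpleGraph V) (p q : V → ℕ) : Prop :=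
  (∃ v u, G.Adj v u ∧ 2 ≤ p v ∧
      q = fun x => if x = v then p x - 2 else if x = u then p x + 1 else p x) ∨
  (∃ v w u, v ≠ w ∧ G.Adj v u ∧ G.Adj w u ∧ 1 ≤ p v ∧ 1 ≤ p w ∧
      q = fun x => if x = v then p x - 1 else if x = w then p x - 1
          else if x = u then p x + 1 else p x)

/-- `q` is obtainable from `p` by an executable rubbling sequence. -/
def RubblingReach {V : Type*} [DecidableEq V] (G : SimpleGraph V) : (V → ℕ) → (V → ℕ) → Prop :=
  Relation.ReflTransGen (RubblingStep G)

/-- The vertex `u` is `k`-reachable from the distribution `p`. -/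
def KReachable {V : Type*} [DecidableEq V] (G : SimpleGraph V) (p : V → ℕ) (u : V) (k : ℕ) : Prop :=
  ∃ q, RubblingReach G p q ∧ k ≤ q u

/-- `p` is solvable: every vertex is reachable. -/
def Solvable {V : Type*} [DecidableEq V] (G : SimpleGraph V) (p : V → ℕ) : Prop :=
  ∀ u, KReachable G p u 1

/-- The optimal rubbling number: the minimum size of a solvable distribution. -/
noncomputable def optRub {V : Type*} [DecidableEq V] [Fintype V] (G : SimpleGraph V) : ℕ :=
  sInf {m | ∃ p : V → ℕ, Solvable G p ∧ ∑ v, p v = m}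

/-- The `n`-prism `C_n □ P_2`. -/
def prism (n : ℕ) : SimpleGraph (Fin n × Fin 2) :=
  cycleGraph n □ pathGraph 2

/-!
Projecting the prism to the cycle, with the pebbles of one chosen layer counted twice, turns
rubbling moves into rubbling moves. A solvable distribution thus projects to one that makes every
vertex of `C_n` 2-reachable, and this takes `n` pebbles: with fewer, some vertex cannot collect two
because a supply of pebbles halves with every step along the cycle. Adding up both choices of the
layer gives `2n ≤ 3|p|`.

For `n = 3k` and `n = 3k + 1` the bound is attained by pebbles alternating between the layers at
distances `2, 1, 2, 1, …`. Contracting an edge of the cycle does not increase the optimal rubbling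
number, which settles `n = 3k - 1`, and `n = 3` up to excluding two pebbles.
-/

section Yields

variable {V W : Type*} [DecidableEq V] [DecidableEq W] {G : SimpleGraph V} {H : SimpleGraph W}
  {p q r : V → ℕ}

/-- The distribution consisting of a single pebble at `v`. -/
abbrev pebble (v : V) : V → ℕ := Pi.single v 1

theorem single_le_iff {v : V} {k : ℕ} : Pi.single v k ≤ p ↔ k ≤ p v := by
  refine ⟨fun h ↦ by simpa using h v, fun h x ↦ ?_⟩
  obtain rfl | hx := eq_or_ne x v <;> simp [*]

theorem rubblingStep_iff : RubblingStep G p q ↔ ∃ v w u r, G.Adj v u ∧ G.Adj w u ∧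
    p = pebble v + pebble w + r ∧ q = pebble u + r := by
  constructor
  · rintro (⟨v, u, hvu, hv, rfl⟩ | ⟨v, w, u, hvw, hvu, hwu, hv, hw, rfl⟩)
    · refine ⟨v, v, u, p - (pebble v + pebble v), hvu, hvu, ?_, ?_⟩ <;> ext x <;>
        have := hvu.ne <;> simp only [Pi.add_apply, Pi.sub_apply, Pi.single_apply] <;> grind
    · refine ⟨v, w, u, p - (pebble v + pebble w), hvu, hwu, ?_, ?_⟩ <;> ext x <;>
        have := hvu.ne <;> have := hwu.ne <;>
        simp only [Pi.add_apply, Pi.sub_apply, Pi.single_apply] <;> grind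
  · rintro ⟨v, w, u, r, hvu, hwu, rfl, rfl⟩
    have := hvu.ne
    have := hwu.ne
    obtain rfl | hvw := eq_or_ne v w
    · refine .inl ⟨v, u, hvu, by simp, ?_⟩
      ext x
      simp only [Pi.add_apply, Pi.single_apply]
      grind
    · refine .inr ⟨v, w, u, hvw, hvu, hwu, by simp; omega, by simp; omega, ?_⟩
      ext x
      simp only [Pi.add_apply, Pi.single_apply]
      grind

theorem RubblingStep.add_right (h : RubblingStep G p q) (r : V → ℕ) :
    RubblingStep G (p + r) (q + r) := by
  obtain ⟨v, w, u, r', hv, hw, rfl, rfl⟩ := rubblingStep_iff.1 h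
  exact rubblingStep_iff.2 ⟨v, w, u, r' + r, hv, hw, add_assoc .., add_assoc ..⟩

theorem RubblingReach.add_right (h : RubblingReach G p q) (r : V → ℕ) :
    RubblingReach G (p + r) (q + r) :=
  Relation.ReflTransGen.lift (· + r) (fun _ _ hs ↦ hs.add_right r) _ _ h

/-- `Yields G p q` means that rubbling moves lead from `p` to a distribution with at least as many
pebbles as `q` on every vertex. Discarding pebbles makes this a preorder compatible with addition,
which `RubblingReach` is not. -/
def Yields (G : SimpleGraph V) (p q : V → ℕ) : Prop :=
  ∃ q', RubblingReach G p q' ∧ q ≤ q'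

theorem Yields.of_le (h : q ≤ p) : Yields G p q := ⟨p, .refl, h⟩

theorem Yields.trans (hpq : Yields G p q) (hqr : Yields G q r) : Yields G p r := by
  obtain ⟨p', hp, hq⟩ := hpq
  obtain ⟨d, rfl⟩ := exists_add_of_le hq
  obtain ⟨q', hq', hr⟩ := hqr
  exact ⟨q' + d, Relation.ReflTransGen.trans hp (hq'.add_right d), le_add_right hr⟩

theorem Yields.add_right (h : Yields G p q) (r : V → ℕ) : Yields G (p + r) (q + r) := by
  obtain ⟨q', hq', hq⟩ := h
  exact ⟨q' + r, hq'.add_right r, add_le_add_left hq r⟩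

theorem Yields.add {p' q' : V → ℕ} (h : Yields G p q) (h' : Yields G p' q') :
    Yields G (p + p') (q + q') := by
  refine (h.add_right p').trans ?_
  simpa only [add_comm q] using h'.add_right q

theorem Yields.nsmul (h : Yields G p q) : ∀ n : ℕ, Yields G (n • p) (n • q)
  | 0 => .of_le (by simp)
  | n + 1 => by simpa only [succ_nsmul] using (h.nsmul n).add h

theorem Yields.of_adj {v w u : V} (hv : G.Adj v u) (hw : G.Adj w u) :
    Yields G (pebble v + pebble w) (pebble u) :=
  ⟨pebble u, .single (rubblingStep_iff.2 ⟨v, w, u, 0, hv, hw, rfl, rfl⟩), le_rfl⟩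

theorem Yields.map (L : (V → ℕ) →+ (W → ℕ))
    (hL : ∀ v w u, G.Adj v u → G.Adj w u →
      Yields H (L (pebble v) + L (pebble w)) (L (pebble u)))
    (h : Yields G p q) : Yields H (L p) (L q) := by
  obtain ⟨q', hq', hq⟩ := h
  obtain ⟨d, rfl⟩ := exists_add_of_le hq
  have hd : L q ≤ L (q + d) := by rw [map_add]; exact le_self_add
  refine Yields.trans ?_ (.of_le hd)
  generalize q + d = q' at hq'
  induction hq' with
  | refl => exact .of_le le_rfl
  | tail _ hs ih =>
    obtain ⟨v, w, u, r, hv, hw, rfl, rfl⟩ := rubblingStep_iff.1 hs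
    refine ih.trans ?_
    simpa only [map_add] using (hL v w u hv hw).add_right (L r)

theorem kReachable_iff_yields {u : V} {k : ℕ} :
    KReachable G p u k ↔ Yields G p (Pi.single u k) := by
  simp only [KReachable, Yields, single_le_iff]

theorem solvable_iff_yields : Solvable G p ↔ ∀ u, Yields G p (pebble u) :=
  forall_congr' fun _ ↦ kReachable_iff_yields

end Yields

section OptRub

variable {V W : Type*} [DecidableEq V] [DecidableEq W] [Fintype V] {G : SimpleGraph V}

theorem optRub_le {p : V → ℕ} (hp : Solvable G p) : optRub G ≤ ∑ v, p v :=
  Nat.sInf_le ⟨p, hp, rfl⟩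

theorem exists_solvable_sum_eq_optRub (G : SimpleGraph V) :
    ∃ p, Solvable G p ∧ ∑ v, p v = optRub G :=
  Nat.sInf_mem (s := {m | ∃ p, Solvable G p ∧ ∑ v, p v = m}) ⟨_, 1, fun _ ↦ ⟨1, .refl, le_rfl⟩, rfl⟩

/-- The image of a distribution under a map of vertices: the pebbles of each fibre are piled up. -/
def pushforward (φ : V → W) : (V → ℕ) →+ (W → ℕ) where
  toFun p := ∑ v, Pi.single (φ v) (p v)
  map_zero' := by simp
  map_add' p q := by simp [Pi.single_add, Finset.sum_add_distrib]

theorem pushforward_pebble (φ : V → W) (v : V) : pushforward φ (pebble v) = pebble (φ v) := by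
  change ∑ x, (Pi.single (φ x) (pebble v x) : W → ℕ) = _
  rw [Finset.sum_eq_single_of_mem v (Finset.mem_univ v) fun x _ hx ↦ by simp [hx]]
  simp

omit [DecidableEq V] in
theorem sum_pushforward [Fintype W] (φ : V → W) (p : V → ℕ) :
    ∑ w, pushforward φ p w = ∑ v, p v := by
  change ∑ w, (∑ v, Pi.single (φ v) (p v)) w = _
  simp only [Finset.sum_apply]
  rw [Finset.sum_comm]
  exact Finset.sum_congr rfl fun v _ ↦ by simp

theorem solvable_pushforward {H : SimpleGraph W} {p : V → ℕ} (hp : Solvable G p) {φ : V → W}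
    (hφ : φ.Surjective) (hadj : ∀ v u, G.Adj v u → φ v = φ u ∨ H.Adj (φ v) (φ u)) :
    Solvable H (pushforward φ p) := by
  rw [solvable_iff_yields] at hp ⊢
  refine hφ.forall.2 fun x ↦ ?_
  rw [← pushforward_pebble]
  refine (hp x).map _ fun v w u hv hw ↦ ?_
  simp only [pushforward_pebble]
  obtain hv | hv := hadj v u hv
  · exact .of_le (hv ▸ le_self_add)
  obtain hw | hw := hadj w u hw
  · exact .of_le (hw ▸ le_add_self)
  exact .of_adj hv hw

theorem optRub_le_of_surjective [Fintype W] {H : SimpleGraph W} {φ : V → W} (hφ : φ.Surjective)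
    (hadj : ∀ v u, G.Adj v u → φ v = φ u ∨ H.Adj (φ v) (φ u)) : optRub H ≤ optRub G := by
  obtain ⟨p, hp, hsum⟩ := exists_solvable_sum_eq_optRub G
  calc
    optRub H ≤ ∑ w, pushforward φ p w := optRub_le (solvable_pushforward hp hφ hadj)
    _ = optRub G := by rw [sum_pushforward, hsum]

end OptRub

section Layers

variable {V α : Type*} [Fintype α] {G : SimpleGraph V}

/-- Projection of a distribution on `V × α` to `V`, seen from the layer `s`: pebbles of layer `s`
count twice and all others once. -/
def layerWeight (s : α) : (V × α → ℕ) →+ (V → ℕ) where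
  toFun p v := p (v, s) + ∑ a, p (v, a)
  map_zero' := by ext; simp
  map_add' p q := by ext; simp only [Pi.add_apply, Finset.sum_add_distrib]; ring

theorem sum_sum_layerWeight [Fintype V] (p : V × α → ℕ) :
    ∑ s, ∑ v, layerWeight s p v = (Fintype.card α + 1) * ∑ x, p x := by
  simp only [layerWeight, AddMonoidHom.coe_mk, ZeroHom.coe_mk, Finset.sum_add_distrib,
    Finset.sum_const, Finset.card_univ, smul_eq_mul, Fintype.sum_prod_type]
  rw [Finset.sum_comm]
  ring

variable [DecidableEq V] [DecidableEq α]

theorem layerWeight_pebble (s a : α) (v : V) :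
    layerWeight s (pebble (v, a)) = (if a = s then 2 else 1) • pebble v := by
  ext w
  simp only [layerWeight, AddMonoidHom.coe_mk, ZeroHom.coe_mk, Pi.smul_apply, Pi.single_apply,
    Prod.mk.injEq, smul_eq_mul]
  by_cases hw : w = v
  · simp only [hw, true_and, Finset.sum_ite_eq', Finset.mem_univ, if_true, eq_comm (a := s)]
    split_ifs <;> rfl
  · simp [hw]

theorem yields_layerWeight_corner {v u : V} {a t : α} (s : α) (hv : G.Adj v u) (hat : a ≠ t) :
    Yields G (layerWeight s (pebble (v, t)) + layerWeight s (pebble (u, a)))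
      (layerWeight s (pebble (u, t))) := by
  simp only [layerWeight_pebble]
  by_cases hts : t = s
  · rw [if_pos hts, if_neg (hts ▸ hat), two_nsmul, two_nsmul, one_nsmul]
    exact (Yields.of_adj hv hv).add_right _
  · rw [if_neg hts]
    refine .of_le (le_add_left (nsmul_le_nsmul_left (by simp) ?_))
    split_ifs <;> omega

theorem Yields.layerWeight {p q : V × α → ℕ} (s : α) (h : Yields (G □ (⊤ : SimpleGraph α)) p q) :
    Yields G (layerWeight s p) (layerWeight s q) := by
  refine h.map _ ?_
  rintro ⟨v, a⟩ ⟨w, b⟩ ⟨u, t⟩ hv hw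
  simp only [boxProd_adj, top_adj] at hv hw
  obtain ⟨hv, rfl⟩ | ⟨ha, rfl⟩ := hv <;> obtain ⟨hw, rfl⟩ | ⟨hb, rfl⟩ := hw
  · simp only [layerWeight_pebble, ← nsmul_add]
    exact (Yields.of_adj hv hw).nsmul _
  · exact yields_layerWeight_corner s hv hb
  · rw [add_comm]
    exact yields_layerWeight_corner s hw ha
  · simp only [layerWeight_pebble, ← add_nsmul]
    exact .of_le (nsmul_le_nsmul_left (by simp) (by split_ifs <;> omega))

theorem card_mul_le_of_solvable [Fintype V] {m : ℕ}
    (hm : ∀ f : V → ℕ, (∀ v, KReachable G f v 2) → m ≤ ∑ v, f v)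
    {p : V × α → ℕ} (hp : Solvable (G □ (⊤ : SimpleGraph α)) p) :
    Fintype.card α * m ≤ (Fintype.card α + 1) * ∑ x, p x := by
  rw [← sum_sum_layerWeight]
  refine (Finset.card_nsmul_le_sum Finset.univ _ m fun s _ ↦ hm _ fun v ↦ ?_)
  have h := (solvable_iff_yields.1 hp (v, s)).layerWeight s
  rw [layerWeight_pebble, if_pos rfl, ← Pi.single_smul] at h
  exact kReachable_iff_yields.2 h

end Layers

section Circulant

variable {ι : Type*} [AddCommGroup ι] {e j u : ι} {f A : ι → ℕ}

/-- `A i` bounds the number of pebbles that can be gathered at `i` when, starting from `f`,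
pebbles are only moved in the direction of `e`. -/
def GatherBound (e : ι) (f A : ι → ℕ) : Prop :=
  ∀ i, f i + A (i - e) / 2 ≤ A i

/-- A certificate that two pebbles can never be collected at `j`: bounds `A` and `A'` on what can be
gathered in the directions `e` and `-e`, such that half of what arrives at the two neighbours of `j`
does not suffice. The certificate is preserved by rubbling moves. -/
def Blocked (e j : ι) (f : ι → ℕ) : Prop :=
  ∃ A A' : ι → ℕ, GatherBound e f A ∧ GatherBound (-e) f A' ∧
    f j + (A (j - e) + A' (j + e)) / 2 ≤ 1

variable [DecidableEq ι]

/- The `a` pebbles moved to `u` in the direction of `e` were already counted at `u` through `u - e`,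
where they are now missing; the `b` pebbles moved against `e` are a gain at `u`. -/
theorem GatherBound.step {r : ι → ℕ} {a b : ℕ} (he : e ≠ 0) (hab : a + b = 2)
    (hsplit : a = 0 ∨ b = 0 ∨ u - e ≠ u + e)
    (hA : GatherBound e (a • pebble (u - e) + b • pebble (u + e) + r) A) :
    GatherBound e (pebble u + r) (A + b • pebble u - a • pebble (u - e)) := by
  intro i
  have hi := hA i
  have hue := hA (u - e)
  have hi_right : i - e = u ↔ i = u + e := sub_eq_iff_eq_add
  have hi_left : i - e = u - e ↔ i = u := sub_left_inj
  have hne_left : u - e ≠ u := by simpa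
  have hne_right : u + e ≠ u := by simpa
  simp only [Pi.add_apply, Pi.sub_apply, Pi.smul_apply, Pi.single_apply, hi_right, hi_left,
    smul_eq_mul, mul_ite, mul_one, mul_zero] at hi hue ⊢
  obtain rfl | hiu := eq_or_ne i u
  · simp only [hne_left.symm, hne_right.symm, if_true, if_false] at hi hue ⊢
    split_ifs at hue <;> omega
  obtain rfl | hi_ne := eq_or_ne i (u + e)
  · simp only [hne_right, if_true, if_false] at hi hue ⊢
    split_ifs at * <;> omega
  simp only [hiu, hi_ne, if_false] at hi hue ⊢
  split_ifs at * <;> omega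

theorem exists_pebble_add_eq {v w : ι} (hv : (circulantGraph {e}).Adj v u)
    (hw : (circulantGraph {e}).Adj w u) :
    ∃ a b : ℕ, a + b = 2 ∧ (a = 0 ∨ b = 0 ∨ u - e ≠ u + e) ∧
      pebble v + pebble w = a • pebble (u - e) + b • pebble (u + e) := by
  have neighbour : ∀ x, (circulantGraph {e}).Adj x u → x = u - e ∨ x = u + e := by
    rintro x ⟨-, h | h⟩
    · exact .inr (by rw [← Set.mem_singleton_iff.1 h, add_sub_cancel])
    · exact .inl (by rw [← Set.mem_singleton_iff.1 h, sub_sub_cancel])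
  by_cases hvw : v = w
  · obtain rfl | rfl := neighbour v hv
    · exact ⟨2, 0, rfl, by simp, by simp [← hvw, two_mul]⟩
    · exact ⟨0, 2, rfl, by simp, by simp [← hvw, two_mul]⟩
  · refine ⟨1, 1, rfl, ?_⟩
    obtain rfl | rfl := neighbour v hv <;> obtain rfl | rfl := neighbour w hw
    · exact absurd rfl hvw
    · exact ⟨.inr (.inr hvw), by simp⟩
    · exact ⟨.inr (.inr (Ne.symm hvw)), by simp [add_comm]⟩
    · exact absurd rfl hvw

omit [DecidableEq ι] in
theorem ne_zero_of_circulantGraph_adj {v : ι} (h : (circulantGraph {e}).Adj v u) : e ≠ 0 := by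
  rintro rfl
  obtain ⟨hne, h | h⟩ := h
  · exact hne (sub_eq_zero.1 h)
  · exact hne (sub_eq_zero.1 h).symm

theorem Blocked.rubblingStep {f' : ι → ℕ} (hf : Blocked e j f)
    (h : RubblingStep (circulantGraph {e}) f f') : Blocked e j f' := by
  obtain ⟨v, w, u, r, hv, hw, rfl, rfl⟩ := rubblingStep_iff.1 h
  obtain ⟨a, b, hab, hsplit, heq⟩ := exists_pebble_add_eq hv hw
  have he := ne_zero_of_circulantGraph_adj hv
  obtain ⟨A, A', hA, hA', hj⟩ := hf
  rw [heq] at hA hA' hj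
  have hstep' := GatherBound.step (e := -e) (u := u) (a := b) (b := a) (r := r) (A := A')
  simp only [sub_neg_eq_add, ← sub_eq_add_neg] at hstep'
  refine ⟨A + b • pebble u - a • pebble (u - e), A' + a • pebble u - b • pebble (u + e),
    hA.step he hab hsplit,
    hstep' (neg_ne_zero.2 he) (by omega) (by tauto) (by rwa [add_comm (b • _)]), ?_⟩
  have hleft := hA (u - e)
  have hright := hA' (u + e)
  have hj_add : j - e = u ↔ j = u + e := sub_eq_iff_eq_add
  have hj_sub : j + e = u ↔ j = u - e := eq_sub_iff_add_eq.symm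
  have hne_left : u - e ≠ u := by simpa
  have hne_right : u + e ≠ u := by simpa
  simp only [Pi.add_apply, Pi.sub_apply, Pi.smul_apply, Pi.single_apply, hj_add, hj_sub,
    sub_left_inj, add_left_inj, smul_eq_mul, mul_ite, mul_one, mul_zero] at hj hleft hright ⊢
  obtain rfl | hju := eq_or_ne j u
  · simp only [hne_left.symm, hne_right.symm, if_true, if_false] at hj hleft hright ⊢
    split_ifs at * <;> omega
  · simp only [hju, if_false] at hj ⊢
    split_ifs at * <;> omega

theorem Blocked.not_kReachable_two (h : Blocked e j f) :
    ¬ KReachable (circulantGraph {e}) f j 2 := by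
  rintro ⟨q, hq, hj⟩
  have hblocked : Blocked e j q := by
    clear hj
    induction hq with
    | refl => exact h
    | tail _ hs ih => exact ih.rubblingStep hs
  obtain ⟨A, A', -, -, h1⟩ := hblocked
  omega

omit [DecidableEq ι] in
theorem exists_eq_add_half [Finite ι] (e : ι) (f : ι → ℕ) :
    ∃ A : ι → ℕ, ∀ i, f i + A (i - e) / 2 = A i := by
  obtain ⟨M, hM⟩ : ∃ M, ∀ i, f i ≤ M := (Set.finite_range f).bddAbove.imp fun M h i ↦ h ⟨i, rfl⟩
  obtain ⟨A, hA⟩ := exists_minimal_of_wellFoundedLT (GatherBound e f)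
    ⟨fun _ ↦ 2 * M, fun i ↦ by have := hM i; dsimp only; omega⟩
  have hbound : GatherBound e f fun i ↦ f i + A (i - e) / 2 := fun i ↦ by
    have := hA.prop (i - e)
    dsimp only
    gcongr
  exact ⟨A, fun i ↦ (hA.prop i).antisymm (hA.le_of_le hbound hA.prop i)⟩

omit [DecidableEq ι] in
theorem exists_blocked [Fintype ι] (e : ι) (f : ι → ℕ) (hf : ∑ i, f i < Fintype.card ι) :
    ∃ j, Blocked e j f := by
  obtain ⟨A, hA⟩ := exists_eq_add_half e f
  obtain ⟨A', hA'⟩ := exists_eq_add_half (-e) f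
  by_contra! hunblocked
  have hsupply (j : ι) : 2 ≤ f j + (A (j - e) + A' (j + e)) / 2 := by
    by_contra! h
    exact hunblocked j ⟨A, A', fun i ↦ (hA i).le, fun i ↦ (hA' i).le, by omega⟩
  -- Truncated subtraction is intended: where nothing can be gathered, a summand should be `0`.
  -- Summing over `i`, the shifted terms cancel and `2 * card ι ≤ 2 * ∑ i, f i` remains.
  have hlocal (i : ι) :
      (A i - 1) + (A' i - 1) + 2 ≤ 2 * f i + ((A (i - e) - 1) + (A' (i + e) - 1)) := by
    have := hsupply i
    have := hA i
    have := hA' i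
    rw [sub_neg_eq_add] at this
    omega
  have hsum := Finset.sum_le_sum fun i (_ : i ∈ Finset.univ) ↦ hlocal i
  have hshift : ∑ i, (A (i - e) - 1) = ∑ i, (A i - 1) :=
    Equiv.sum_comp (Equiv.subRight e) (A · - 1)
  have hshift' : ∑ i, (A' (i + e) - 1) = ∑ i, (A' i - 1) :=
    Equiv.sum_comp (Equiv.addRight e) (A' · - 1)
  simp only [Finset.sum_add_distrib, ← Finset.mul_sum, hshift, hshift', Finset.sum_const,
    Finset.card_univ, smul_eq_mul] at hsum
  omega

theorem card_le_sum_of_kReachable_two [Fintype ι]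
    (hf : ∀ i, KReachable (circulantGraph {e}) f i 2) : Fintype.card ι ≤ ∑ i, f i := by
  by_contra! hlt
  obtain ⟨j, hj⟩ := exists_blocked e f hlt
  exact hj.not_kReachable_two (hf j)

end Circulant

section Zigzag

variable {V α : Type*} [DecidableEq V] [DecidableEq α] {G : SimpleGraph V} {s t : α}

theorem sum_map_pebble_le {p : V → ℕ} {l : List V} (hl : l.Nodup) (hp : ∀ v ∈ l, p v ≠ 0) :
    (l.map pebble).sum ≤ p := by
  intro x
  have hsum : (l.map pebble).sum x = l.count x := by
    clear hl hp
    induction l with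
    | nil => rfl
    | cons v l ih => simp only [List.map_cons, List.sum_cons, Pi.add_apply, ih, List.count_cons,
        Pi.single_apply, beq_iff_eq, eq_comm (a := v), add_comm]
  rw [hsum, hl.count]
  split_ifs with hx
  · exact Nat.one_le_iff_ne_zero.2 (hp x hx)
  · exact Nat.zero_le _

theorem Yields.of_segment {p : V × α → ℕ} {x y z w : V} (hxy : G.Adj x y) (hyz : G.Adj y z)
    (hzw : G.Adj z w) (hxw : x ≠ w) (hst : s ≠ t) (hx : p (x, s) ≠ 0) (hz : p (z, t) ≠ 0)
    (hw : p (w, s) ≠ 0) :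
    Yields (G □ (⊤ : SimpleGraph α)) p (pebble (y, s)) ∧
      Yields (G □ (⊤ : SimpleGraph α)) p (pebble (z, s)) := by
  have hsupply : pebble (x, s) + (pebble (z, t) + pebble (w, s)) ≤ p := by
    simpa using sum_map_pebble_le (l := [(x, s), (z, t), (w, s)]) (by simp [hst, hst.symm, hxw])
      (by simp [hx, hz, hw])
  have hz' : Yields (G □ (⊤ : SimpleGraph α)) (pebble (z, t) + pebble (w, s)) (pebble (z, s)) :=
    .of_adj (by simp [hst.symm]) (by simp [hzw.symm])
  have hy' : Yields (G □ (⊤ : SimpleGraph α)) (pebble (x, s) + pebble (z, s)) (pebble (y, s)) :=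
    .of_adj (by simp [hxy]) (by simp [hyz.symm])
  refine ⟨(Yields.of_le hsupply).trans (.trans ?_ hy'),
    (Yields.of_le (le_add_self.trans hsupply)).trans hz'⟩
  simpa only [add_comm] using hz'.add_right (pebble (x, s))

variable {p : V × α → ℕ} {c : ℕ → V} {k i : ℕ}

theorem Yields.zigzag_left (hc : ∀ i, G.Adj (c i) (c (i + 1))) (hne : ∀ i, c i ≠ c (i + 3))
    (hst : s ≠ t) (hs : ∀ j ≤ k, p (c (3 * j), s) ≠ 0) (ht : ∀ j < k, p (c (3 * j + 2), t) ≠ 0)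
    (hi : i ≤ 3 * k) : Yields (G □ (⊤ : SimpleGraph α)) p (pebble (c i, s)) := by
  obtain ⟨j, rfl | rfl | rfl⟩ : ∃ j, i = 3 * j ∨ i = 3 * j + 1 ∨ i = 3 * j + 2 := ⟨i / 3, by omega⟩
  · exact .of_le (single_le_iff.2 (Nat.one_le_iff_ne_zero.2 (hs j (by omega))))
  all_goals
    have hsegment := Yields.of_segment (hc (3 * j)) (hc (3 * j + 1)) (hc (3 * j + 2)) (hne _) hst
      (hs j (by omega)) (ht j (by omega)) (hs (j + 1) (by omega))
  · exact hsegment.1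
  · exact hsegment.2

theorem Yields.zigzag_right (hc : ∀ i, G.Adj (c i) (c (i + 1))) (hne : ∀ i, c i ≠ c (i + 3))
    (hst : s ≠ t) (hs : ∀ j ≤ k, p (c (3 * j), s) ≠ 0) (ht : ∀ j < k, p (c (3 * j + 2), t) ≠ 0)
    (hi : 2 ≤ i) (hik : i < 3 * k) : Yields (G □ (⊤ : SimpleGraph α)) p (pebble (c i, t)) := by
  obtain ⟨j, rfl | rfl | rfl⟩ : ∃ j, i = 3 * j + 2 ∨ i = 3 * j + 3 ∨ i = 3 * j + 4 :=
    ⟨(i - 2) / 3, by omega⟩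
  · exact .of_le (single_le_iff.2 (Nat.one_le_iff_ne_zero.2 (ht j (by omega))))
  all_goals
    have hsegment := Yields.of_segment (hc (3 * j + 4)).symm (hc (3 * j + 3)).symm
      (hc (3 * j + 2)).symm (hne _).symm hst.symm (ht (j + 1) (by omega)) (hs (j + 1) (by omega))
      (ht j (by omega))
  · exact hsegment.2
  · exact hsegment.1

theorem Yields.of_bridge {v w x y z : V} (hvw : G.Adj v w) (hwx : G.Adj w x) (hxy : G.Adj x y)
    (hyz : G.Adj y z) (hvz : v ≠ z) (hst : s ≠ t) (hv : p (v, t) ≠ 0) (hw : p (w, s) ≠ 0)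
    (hx : p (x, s) ≠ 0) (hz : p (z, t) ≠ 0) {u : V} (hu : u = w ∨ u = x ∨ u = y) :
    Yields (G □ (⊤ : SimpleGraph α)) p (pebble (u, t)) := by
  have hsupply : pebble (v, t) + pebble (w, s) + pebble (x, s) + pebble (z, t) ≤ p := by
    simpa [add_assoc] using sum_map_pebble_le (l := [(v, t), (w, s), (x, s), (z, t)])
      (by simp [hst, hst.symm, hwx.ne, hvz]) (by simp [hv, hw, hx, hz])
  have hw' : Yields (G □ (⊤ : SimpleGraph α)) (pebble (v, t) + pebble (w, s)) (pebble (w, t)) :=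
    .of_adj (by simp [hvw]) (by simp [hst])
  have hx' : Yields (G □ (⊤ : SimpleGraph α)) (pebble (w, t) + pebble (x, s)) (pebble (x, t)) :=
    .of_adj (by simp [hwx]) (by simp [hst])
  have hy' : Yields (G □ (⊤ : SimpleGraph α)) (pebble (x, t) + pebble (z, t)) (pebble (y, t)) :=
    .of_adj (by simp [hxy]) (by simp [hyz.symm])
  have hwx' := (hw'.add_right (pebble (x, s))).trans hx'
  refine (Yields.of_le hsupply).trans ?_
  obtain rfl | rfl | rfl := hu
  · exact (Yields.of_le (by rw [add_assoc]; exact le_self_add)).trans hw'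
  · exact (Yields.of_le le_self_add).trans hwx'
  · exact (hwx'.add_right (pebble (z, t))).trans hy'

end Zigzag

section TwoPebbles

variable {V : Type*} [DecidableEq V] {G : SimpleGraph V} {p q r : V → ℕ} {u v x y : V}

theorem solvable_two_nsmul_add
    (h : ∀ u, u = x ∨ u = y ∨ G.Adj x u ∨ ∃ z, G.Adj x z ∧ G.Adj z u ∧ G.Adj y u) :
    Solvable G (2 • pebble x + pebble y) := by
  rw [solvable_iff_yields, two_nsmul]
  intro u
  obtain rfl | rfl | hxu | ⟨z, hxz, hzu, hyu⟩ := h u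
  · exact .of_le (le_add_right le_self_add)
  · exact .of_le le_add_self
  · exact (Yields.of_le le_self_add).trans (.of_adj hxu hxu)
  · exact ((Yields.of_adj hxz hxz).add_right _).trans (.of_adj hzu hyu)

theorem eq_of_pebble_add_eq_pebble (h : pebble v + r = pebble x) : v = x ∧ r = 0 := by
  have hv : v = x := by
    by_contra hvx
    simpa [hvx] using congrFun h v
  subst hv
  exact ⟨rfl, add_eq_left.1 h⟩

theorem eq_or_eq_of_pebble_add_eq (h : pebble v + r = pebble x + pebble y) :
    v = x ∧ r = pebble y ∨ v = y ∧ r = pebble x := by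
  have hv : v = x ∨ v = y := by
    by_contra! hv
    simpa [hv.1, hv.2] using congrFun h v
  obtain rfl | rfl := hv
  · exact .inl ⟨rfl, add_left_cancel h⟩
  · exact .inr ⟨rfl, add_left_cancel (h.trans (add_comm _ _))⟩

theorem not_rubblingStep_pebble : ¬ RubblingStep G (pebble x) q := by
  intro h
  obtain ⟨v, w, u, r, -, -, hx, -⟩ := rubblingStep_iff.1 h
  rw [add_assoc] at hx
  simpa using congrFun (eq_of_pebble_add_eq_pebble hx.symm).2 w

theorem exists_eq_pebble_of_rubblingStep (h : RubblingStep G (pebble x + pebble y) q) :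
    ∃ u, G.Adj x u ∧ G.Adj y u ∧ q = pebble u := by
  obtain ⟨v, w, u, r, hv, hw, hxy, rfl⟩ := rubblingStep_iff.1 h
  rw [add_assoc] at hxy
  obtain ⟨rfl, hr⟩ | ⟨rfl, hr⟩ := eq_or_eq_of_pebble_add_eq hxy.symm <;>
    obtain ⟨rfl, rfl⟩ := eq_of_pebble_add_eq_pebble hr
  · exact ⟨u, hv, hw, add_zero _⟩
  · exact ⟨u, hw, hv, add_zero _⟩

theorem RubblingReach.of_pebble_add_pebble (h : RubblingReach G (pebble x + pebble y) q) :
    q = pebble x + pebble y ∨ ∃ u, G.Adj x u ∧ G.Adj y u ∧ q = pebble u := by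
  induction h with
  | refl => exact .inl rfl
  | tail _ hs ih =>
    obtain rfl | ⟨u, -, -, rfl⟩ := ih
    · exact .inr (exists_eq_pebble_of_rubblingStep hs)
    · exact absurd hs not_rubblingStep_pebble

theorem Solvable.eq_or_adj_of_pebble_add_pebble (h : Solvable G (pebble x + pebble y)) (u : V) :
    u = x ∨ u = y ∨ G.Adj x u ∧ G.Adj y u := by
  obtain ⟨q, hq, hu⟩ := h u
  obtain rfl | ⟨v, hx, hy, rfl⟩ := hq.of_pebble_add_pebble
  · by_contra! hne
    simp [hne.1, hne.2.1] at hu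
  · obtain rfl : u = v := by
      by_contra hne
      simp [hne] at hu
    exact .inr (.inr ⟨hx, hy⟩)

variable [Fintype V]

theorem exists_eq_pebble_add {m : ℕ} (h : ∑ v, p v = m + 1) :
    ∃ x r, p = pebble x + r ∧ ∑ v, r v = m := by
  obtain ⟨x, -, hx⟩ := Finset.exists_ne_zero_of_sum_ne_zero (h.trans_ne m.succ_ne_zero)
  obtain ⟨r, rfl⟩ := exists_add_of_le (single_le_iff.2 (Nat.one_le_iff_ne_zero.2 hx))
  refine ⟨x, r, rfl, ?_⟩
  simpa [Finset.sum_add_distrib, add_comm 1] using h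

theorem exists_eq_pebble_add_pebble (h : ∑ v, p v = 2) : ∃ x y, p = pebble x + pebble y := by
  obtain ⟨x, r, rfl, hr⟩ := exists_eq_pebble_add h
  obtain ⟨y, r', rfl, hr'⟩ := exists_eq_pebble_add hr
  obtain rfl : r' = 0 := by simpa [funext_iff] using hr'
  exact ⟨x, y, by rw [add_zero]⟩

end TwoPebbles

section Prism

theorem prism_eq_boxProd_top (n : ℕ) : prism n = cycleGraph n □ (⊤ : SimpleGraph (Fin 2)) := by
  rw [prism, pathGraph_two_eq_top]

theorem two_mul_le_three_mul_optRub_prism (n : ℕ) : 2 * n ≤ 3 * optRub (prism n) := by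
  obtain - | n := n
  · simp
  obtain ⟨p, hp, hsum⟩ := exists_solvable_sum_eq_optRub (prism (n + 1))
  rw [prism_eq_boxProd_top] at hp
  have hcycle (f : Fin (n + 1) → ℕ) (hf : ∀ v, KReachable (cycleGraph (n + 1)) f v 2) :
      n + 1 ≤ ∑ v, f v := by
    rw [cycleGraph_eq_circulantGraph] at hf
    simpa using card_le_sum_of_kReachable_two hf
  simpa [hsum] using card_mul_le_of_solvable hcycle hp

theorem cycleGraph_adj_ofNat {n : ℕ} [NeZero n] (hn : 1 < n) (i : ℕ) :
    (cycleGraph n).Adj (Fin.ofNat n i) (Fin.ofNat n (i + 1)) := by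
  obtain ⟨n, rfl⟩ : ∃ m, n = m + 2 := ⟨n - 2, by omega⟩
  rw [cycleGraph_adj]
  right
  rw [sub_eq_iff_eq_add']
  ext
  simp [Fin.val_add]

theorem ofNat_ne_ofNat_add {n d : ℕ} [NeZero n] (hd : 0 < d) (hdn : d < n) (i : ℕ) :
    Fin.ofNat n i ≠ Fin.ofNat n (i + d) := by
  intro h
  have := (Nat.modEq_iff_dvd' (Nat.le_add_right i d)).1 (congrArg Fin.val h)
  rw [Nat.add_sub_cancel_left] at this
  exact absurd (Nat.le_of_dvd hd this) (by omega)

/-- One pebble on each vertex `(i, 0)` with `i ≡ 0` and each `(i, 1)` with `i ≡ 2` modulo `3`: the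
optimal distribution when `n` is `3k` or `3k + 1` with `k ≥ 2`. -/
def zigzag (n : ℕ) : Fin n × Fin 2 → ℕ :=
  fun x ↦ if (x.1 : ℕ) % 3 = 2 * x.2 then 1 else 0

theorem sum_zigzag (n : ℕ) : ∑ x, zigzag n x = (n + 2) / 3 + n / 3 := by
  simp only [zigzag, Fintype.sum_prod_type, Fin.sum_univ_two]
  induction n with
  | zero => rfl
  | succ n ih =>
    simp only [Fin.sum_univ_castSucc, Fin.val_castSucc, Fin.val_last, ih]
    simp only [Fin.val_zero, Fin.val_one]
    split_ifs <;> omega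

theorem zigzag_ofNat_ne_zero {n i : ℕ} [NeZero n] {s : Fin 2} (hi : i % 3 = 2 * s)
    (hn : 3 ∣ n ∨ i < n) : zigzag n (Fin.ofNat n i, s) ≠ 0 := by
  have hmod : i % n % 3 = i % 3 := by
    obtain hn | hn := hn
    · exact Nat.mod_mod_of_dvd i hn
    · rw [Nat.mod_eq_of_lt hn]
  simp [zigzag, hmod, hi]

theorem solvable_zigzag_three_mul {k : ℕ} (hk : 2 ≤ k) :
    Solvable (prism (3 * k)) (zigzag (3 * k)) := by
  have : NeZero (3 * k) := ⟨by omega⟩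
  rw [prism_eq_boxProd_top, solvable_iff_yields]
  have hc := cycleGraph_adj_ofNat (n := 3 * k) (by omega)
  have hne := ofNat_ne_ofNat_add (n := 3 * k) three_pos (by omega)
  have htop (j : ℕ) : zigzag (3 * k) (Fin.ofNat _ (3 * j), 0) ≠ 0 :=
    zigzag_ofNat_ne_zero (by simp) (.inl (dvd_mul_right 3 k))
  have hbottom (j : ℕ) : zigzag (3 * k) (Fin.ofNat _ (3 * j + 2), 1) ≠ 0 :=
    zigzag_ofNat_ne_zero (by simp) (.inl (dvd_mul_right 3 k))
  rintro ⟨v, s⟩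
  -- Going once around the cycle first keeps the two columns before `v` at nonnegative indices.
  have hv : v = Fin.ofNat (3 * k) (v + 3 * k) := by ext; simp [Nat.mod_eq_of_lt v.is_lt]
  rw [hv]
  fin_cases s
  · exact .zigzag_left (k := 2 * k) hc hne zero_ne_one (fun j _ ↦ htop j) (fun j _ ↦ hbottom j)
      (by omega)
  · exact .zigzag_right (k := 2 * k) hc hne zero_ne_one (fun j _ ↦ htop j) (fun j _ ↦ hbottom j)
      (by omega) (by omega)

theorem solvable_zigzag_three_mul_add_one {k : ℕ} (hk : 2 ≤ k) :
    Solvable (prism (3 * k + 1)) (zigzag (3 * k + 1)) := by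
  rw [prism_eq_boxProd_top, solvable_iff_yields]
  have hc := cycleGraph_adj_ofNat (n := 3 * k + 1) (by omega)
  have hne := ofNat_ne_ofNat_add (n := 3 * k + 1) three_pos (by omega)
  have htop : ∀ j ≤ k, zigzag (3 * k + 1) (Fin.ofNat _ (3 * j), 0) ≠ 0 :=
    fun j _ ↦ zigzag_ofNat_ne_zero (by simp) (.inr (by omega))
  have hbottom : ∀ j < k, zigzag (3 * k + 1) (Fin.ofNat _ (3 * j + 2), 1) ≠ 0 :=
    fun j _ ↦ zigzag_ofNat_ne_zero (by simp) (.inr (by omega))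
  rintro ⟨v, s⟩
  have hv : v = Fin.ofNat (3 * k + 1) v := by simp
  rw [hv]
  fin_cases s
  · exact .zigzag_left hc hne zero_ne_one htop hbottom (by omega)
  by_cases hinner : 2 ≤ (v : ℕ) ∧ (v : ℕ) < 3 * k
  · exact .zigzag_right hc hne zero_ne_one htop hbottom hinner.1 hinner.2
  obtain ⟨k, rfl⟩ : ∃ m, k = m + 2 := ⟨k - 2, by omega⟩
  have hwrap : (cycleGraph (3 * (k + 2) + 1)).Adj (Fin.ofNat _ (3 * (k + 2))) (Fin.ofNat _ 0) := by
    simpa using hc (3 * (k + 2))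
  have hends : Fin.ofNat (3 * (k + 2) + 1) (3 * (k + 1) + 2) ≠ Fin.ofNat _ 2 := by
    rw [add_comm (3 * (k + 1))]
    exact (ofNat_ne_ofNat_add (by omega) (by omega) 2).symm
  have houter : (v : ℕ) = 3 * (k + 2) ∨ (v : ℕ) = 0 ∨ (v : ℕ) = 1 := by omega
  exact .of_bridge (hc (3 * (k + 1) + 2)) hwrap (hc 0) (hc 1) hends zero_ne_one
    (hbottom (k + 1) (by omega)) (htop (k + 2) le_rfl) (htop 0 (by omega)) (hbottom 0 (by omega))
    (houter.imp (congrArg _) (.imp (congrArg _) (congrArg _)))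

theorem optRub_prism_three_mul_le {k : ℕ} (hk : 2 ≤ k) : optRub (prism (3 * k)) ≤ 2 * k := by
  refine (optRub_le (solvable_zigzag_three_mul hk)).trans_eq ?_
  rw [sum_zigzag]
  omega

theorem optRub_prism_four_le : optRub (prism 4) ≤ 3 := by
  have hsolv : Solvable (prism 4) (2 • pebble (0, 0) + pebble (2, 1)) := by
    refine solvable_two_nsmul_add ?_
    simp only [prism, boxProd_adj, cycleGraph_adj', pathGraph_adj]
    decide
  exact optRub_le hsolv

theorem optRub_prism_three_mul_add_one_le {k : ℕ} (hk : 1 ≤ k) :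
    optRub (prism (3 * k + 1)) ≤ 2 * k + 1 := by
  obtain rfl | hk := hk.eq_or_lt
  · exact optRub_prism_four_le
  refine (optRub_le (solvable_zigzag_three_mul_add_one hk)).trans_eq ?_
  rw [sum_zigzag]
  omega

theorem optRub_prism_le_succ {n : ℕ} (hn : 1 < n) : optRub (prism n) ≤ optRub (prism (n + 1)) := by
  have : NeZero n := ⟨by omega⟩
  have hcontract (i : Fin (n + 1)) : Fin.ofNat n i = Fin.ofNat n ↑(i + 1) ∨
      (cycleGraph n).Adj (Fin.ofNat n i) (Fin.ofNat n ↑(i + 1)) := by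
    obtain rfl | hi := eq_or_ne i (Fin.last n)
    · left; simp
    · right
      rw [Fin.val_add_one_of_lt (Fin.lt_last_iff_ne_last.2 hi)]
      exact cycleGraph_adj_ofNat hn i
  refine optRub_le_of_surjective (φ := Prod.map (fun i ↦ Fin.ofNat n i) id)
    (.prodMap (fun i ↦ ⟨i.castSucc, by simp⟩) Function.surjective_id) ?_
  rintro ⟨v, s⟩ ⟨u, t⟩ h
  simp only [prism, boxProd_adj, Prod.map, id, Prod.mk.injEq] at h ⊢
  obtain ⟨h, rfl⟩ | ⟨h, rfl⟩ := h
  · rw [cycleGraph_eq_circulantGraph] at h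
    obtain ⟨-, h | h⟩ := h
    · obtain rfl : v = u + 1 := by rw [← Set.mem_singleton_iff.1 h, add_sub_cancel]
      have := hcontract u
      tauto
    · obtain rfl : u = v + 1 := by rw [← Set.mem_singleton_iff.1 h, add_sub_cancel]
      have := hcontract v
      tauto
  · exact .inr (.inr ⟨h, rfl⟩)

theorem optRub_prism_three_ne_two : optRub (prism 3) ≠ 2 := by
  intro h
  obtain ⟨p, hp, hsum⟩ := exists_solvable_sum_eq_optRub (prism 3)
  obtain ⟨x, y, rfl⟩ := exists_eq_pebble_add_pebble (hsum.trans h)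
  have hunreachable : ∀ x y : Fin 3 × Fin 2,
      ∃ u, ¬ (u = x ∨ u = y ∨ (prism 3).Adj x u ∧ (prism 3).Adj y u) := by
    simp only [prism, boxProd_adj, cycleGraph_adj', pathGraph_adj]
    decide
  obtain ⟨u, hu⟩ := hunreachable x y
  exact hu (hp.eq_or_adj_of_pebble_add_pebble u)

end Prism

/-- The optimal rubbling numbers of the `n`-prisms. -/
theorem optRub_prism :
    (∀ k : ℕ, 2 ≤ k →
      optRub (prism (3 * k - 1)) = 2 * k ∧ optRub (prism (3 * k)) = 2 * k) ∧
    (∀ k : ℕ, 1 ≤ k → optRub (prism (3 * k + 1)) = 2 * k + 1) ∧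
    optRub (prism 3) = 3 := by
  refine ⟨fun k hk ↦ ?_, fun k hk ↦ ?_, ?_⟩
  · have hupper := optRub_prism_three_mul_le hk
    have hcontract := optRub_prism_le_succ (n := 3 * k - 1) (by omega)
    rw [Nat.sub_add_cancel (by omega)] at hcontract
    have hlower := two_mul_le_three_mul_optRub_prism (3 * k - 1)
    omega
  · have hupper := optRub_prism_three_mul_add_one_le hk
    have hlower := two_mul_le_three_mul_optRub_prism (3 * k + 1)
    omega
  · have hupper : optRub (prism 3) ≤ 3 :=
      (optRub_prism_le_succ (by norm_num)).trans optRub_prism_four_le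
    have hlower := two_mul_le_three_mul_optRub_prism 3
    have hne := optRub_prism_three_ne_two
    omega
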